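/- Let s : ℝ → (n×n real symmetric matrices) solve ∂s = c + d·s - s·(a + b·s), where b, c are symmetric and a = -d^T. Define u := (I - i·s)(I + i·s)^{-1}. Then u solves ∂u = C + D·u - u·(D̄ + C̄·u), where C := ½(a - d - i(b + c)), D := ½(a + d + i(b - c)), and bar denotes entrywise complex conjugation. -/

import Mathlib

open Matrix

attribute [local instance] Matrix.frobeniusNormedAddCommGroup Matrix.frobeniusNormedSpace

/-- Complexification of a real matrix. -/
def mc {n : ℕ} (a : Matrix (Fin n) (Fin n) ℝ) : Matrix (Fin n) (Fin n) ℂ :=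
  a.map Complex.ofReal

/-- `C = ½(a - d - i(b+c))`. -/
noncomputable def Cmat {n : ℕ} (a b c d : Matrix (Fin n) (Fin n) ℝ) :
    Matrix (Fin n) (Fin n) ℂ :=
  (1 / 2 : ℂ) • (mc a - mc d - Complex.I • (mc b + mc c))

/-- `D = ½(a + d + i(b-c))`. -/
noncomputable def Dmat {n : ℕ} (a b c d : Matrix (Fin n) (Fin n) ℝ) :
    Matrix (Fin n) (Fin n) ℂ :=
  (1 / 2 : ℂ) • (mc a + mc d + Complex.I • (mc b - mc c))

/-- Entrywise complex conjugation. -/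
def mconj {n : ℕ} (M : Matrix (Fin n) (Fin n) ℂ) : Matrix (Fin n) (Fin n) ℂ :=
  M.map (starRingEnd ℂ)

/-!
In homogeneous coordinates the Riccati equation is linear: the column `(s, 1)` satisfies
`s' = d s + c 1 - s k` and `1' = b s + a 1 - 1 k` with `k = a + b s`. The Cayley transform is the
projective change of coordinates from `(s, 1)` to `(p, q) = (1 - i s, 1 + i s)`, in which the
system reads `p' = D p + C q - p k`, `q' = C̄ p + D̄ q - q k`. The term in `k` only rescales
`(p, q)` and drops out of the quotient, so `u = p q⁻¹` solves the Riccati equation with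
coefficients `C`, `D`, `C̄`, `D̄`. For symmetric real `s` the matrix `i s` is skew-Hermitian, which
makes `q` invertible.
-/

section HomogeneousCoordinates

variable {𝕜 A : Type*} [NontriviallyNormedField 𝕜] [NormedRing A] [NormedAlgebra 𝕜 A]
  [HasSummableGeomSeries A]

theorem hasDerivAt_ringInverse {q : 𝕜 → A} {q' : A} {x : 𝕜} (hq : HasDerivAt q q' x)
    (hu : IsUnit (q x)) :
    HasDerivAt (fun y => Ring.inverse (q y))
      (-(Ring.inverse (q x) * q' * Ring.inverse (q x))) x := by
  obtain ⟨w, hw⟩ := hu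
  have hinv : HasFDerivAt Ring.inverse (-ContinuousLinearMap.mulLeftRight 𝕜 A ↑w⁻¹ ↑w⁻¹) (q x) :=
    hw ▸ hasFDerivAt_ringInverse w
  rw [← hw, Ring.inverse_unit]
  exact hinv.comp_hasDerivAt x hq

theorem hasDerivAt_mul_ringInverse_of_linear {p q : 𝕜 → A} {C D C' D' k : A} {x : 𝕜}
    (hp : HasDerivAt p (D * p x + C * q x - p x * k) x)
    (hq : HasDerivAt q (D' * q x + C' * p x - q x * k) x) (hu : IsUnit (q x)) :
    HasDerivAt (fun y => p y * Ring.inverse (q y))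
      (C + D * (p x * Ring.inverse (q x))
        - p x * Ring.inverse (q x) * (D' + C' * (p x * Ring.inverse (q x)))) x := by
  refine (hp.mul (hasDerivAt_ringInverse hq hu)).congr_deriv ?_
  have hqv : q x * Ring.inverse (q x) = 1 := Ring.mul_inverse_cancel _ hu
  have hvq (y : A) : Ring.inverse (q x) * (q x * y) = y := Ring.inverse_mul_cancel_left _ _ hu
  simp only [mul_add, add_mul, mul_sub, sub_mul, mul_neg, mul_assoc, hqv, hvq, mul_one]
  abel

end HomogeneousCoordinates

section CayleyTransform

variable {K A : Type*} [Field K] [Ring A] [Algebra K A]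

/-- The Cayley transform `(1 - j s) (1 + j s)⁻¹`, where the scalar `j` plays the role of `i`; it has
a junk value when `1 + j s` is not a unit. -/
noncomputable def cayley (j : K) (s : A) : A :=
  (1 - j • s) * Ring.inverse (1 + j • s)

/-- The coefficient `C` of the Cayley-transformed Riccati equation, where the scalar `j` plays the
role of `i`; its conjugate is obtained by replacing `j` with `-j`. -/
def cayleyC (j : K) (a b c d : A) : A :=
  (1 / 2 : K) • (a - d - j • (b + c))

/-- The coefficient `D` of the Cayley-transformed Riccati equation, where the scalar `j` plays the
role of `i`; its conjugate is obtained by replacing `j` with `-j`. -/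
def cayleyD (j : K) (a b c d : A) : A :=
  (1 / 2 : K) • (a + d + j • (b - c))

theorem neg_smul_riccati_eq [NeZero (2 : K)] {j : K} (hj : j * j = -1) (a b c d s : A) :
    -(j • (c + d * s - s * (a + b * s))) =
      cayleyD j a b c d * (1 - j • s) + cayleyC j a b c d * (1 + j • s)
        - (1 - j • s) * (a + b * s) := by
  have h_sum : cayleyD j a b c d + cayleyC j a b c d = a - j • c := by
    unfold cayleyC cayleyD
    match_scalars <;> field_simp <;> ring
  have h_diff : cayleyC j a b c d - cayleyD j a b c d = -d - j • b := by
    unfold cayleyC cayleyD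
    match_scalars <;> field_simp <;> ring
  calc -(j • (c + d * s - s * (a + b * s)))
      = a - j • c + j • ((-d - j • b) * s) - (1 - j • s) * (a + b * s) := by
        simp only [sub_mul, one_mul, neg_mul, smul_mul_assoc, smul_sub, smul_smul, hj]
        module
    _ = _ := by
        rw [← h_sum, ← h_diff]
        simp only [mul_add, mul_sub, sub_mul, mul_one, mul_smul_comm]
        module

end CayleyTransform

section RiccatiEquation

variable {𝕜 K A : Type*} [NontriviallyNormedField 𝕜] [Field K] [NeZero (2 : K)] [NormedRing A]
  [NormedAlgebra 𝕜 A] [Algebra K A] [SMulCommClass 𝕜 K A] [ContinuousConstSMul K A]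

theorem hasDerivAt_one_sub_smul_of_riccati {j : K} (hj : j * j = -1) {a b c d : A} {s : 𝕜 → A}
    {x : 𝕜} (hs : HasDerivAt s (c + d * s x - s x * (a + b * s x)) x) :
    HasDerivAt (fun y => 1 - j • s y)
      (cayleyD j a b c d * (1 - j • s x) + cayleyC j a b c d * (1 + j • s x)
        - (1 - j • s x) * (a + b * s x)) x :=
  ((hs.const_smul j).const_sub 1).congr_deriv (neg_smul_riccati_eq hj a b c d (s x))

theorem hasDerivAt_cayley_of_riccati [HasSummableGeomSeries A] {j : K} (hj : j * j = -1)
    {a b c d : A} {s : 𝕜 → A} {x : 𝕜} (hu : IsUnit (1 + j • s x))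
    (hs : HasDerivAt s (c + d * s x - s x * (a + b * s x)) x) :
    HasDerivAt (fun y => cayley j (s y))
      (cayleyC j a b c d + cayleyD j a b c d * cayley j (s x)
        - cayley j (s x)
          * (cayleyD (-j) a b c d + cayleyC (-j) a b c d * cayley j (s x))) x := by
  have hp := hasDerivAt_one_sub_smul_of_riccati hj hs
  have hq := hasDerivAt_one_sub_smul_of_riccati (j := -j) (by rw [neg_mul_neg, hj]) hs
  simp only [neg_smul, sub_neg_eq_add, ← sub_eq_add_neg] at hq
  exact hasDerivAt_mul_ringInverse_of_linear hp hq hu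

end RiccatiEquation

open scoped ComplexOrder in
theorem isUnit_one_add_of_mem_skewAdjoint {m 𝕜 : Type*} [Fintype m] [DecidableEq m] [RCLike 𝕜]
    {T : Matrix m m 𝕜} (hT : T ∈ skewAdjoint (Matrix m m 𝕜)) : IsUnit (1 + T) := by
  have h_star : Tᴴ = -T := skewAdjoint.mem_iff.1 hT
  have h_gram : (1 - T) * (1 + T) = 1 + Tᴴ * T := by
    rw [h_star]
    noncomm_ring
  have h_posDef : (1 + Tᴴ * T).PosDef :=
    PosDef.one.add_posSemidef (posSemidef_conjTranspose_mul_self T)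
  exact isUnit_of_mul_isUnit_right (h_gram ▸ h_posDef.isUnit)

section Complexification

open Complex

variable {n : ℕ}

theorem mc_eq_mapMatrix (a : Matrix (Fin n) (Fin n) ℝ) : mc a = ofRealAm.mapMatrix a := rfl

theorem isUnit_one_add_I_smul_mc {s : Matrix (Fin n) (Fin n) ℝ} (hs : sᵀ = s) :
    IsUnit (1 + I • mc s) := by
  have h_selfAdjoint : IsSelfAdjoint (mc s) := by
    ext i j
    simpa [mc] using congrFun₂ hs i j
  exact isUnit_one_add_of_mem_skewAdjoint (h_selfAdjoint.smul_mem_skewAdjoint conj_I)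

theorem hasDerivAt_mc {s : ℝ → Matrix (Fin n) (Fin n) ℝ} {s' : Matrix (Fin n) (Fin n) ℝ} {x : ℝ}
    (hs : HasDerivAt s s' x) : HasDerivAt (fun y => mc (s y)) (mc s') x :=
  (LinearMap.toContinuousLinearMap
    (ofRealAm.mapMatrix (m := Fin n)).toLinearMap).hasFDerivAt.comp_hasDerivAt x hs

theorem mconj_Cmat (a b c d : Matrix (Fin n) (Fin n) ℝ) :
    mconj (Cmat a b c d) = cayleyC (-I) (mc a) (mc b) (mc c) (mc d) := by
  ext
  simp [mconj, Cmat, cayleyC, mc, map_ofNat]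

theorem mconj_Dmat (a b c d : Matrix (Fin n) (Fin n) ℝ) :
    mconj (Dmat a b c d) = cayleyD (-I) (mc a) (mc b) (mc c) (mc d) := by
  ext
  simp [mconj, Dmat, cayleyD, mc, mul_add, map_ofNat]

end Complexification

attribute [local instance] Matrix.frobeniusNormedRing Matrix.frobeniusNormedAlgebra in
theorem cayley_riccati_flow_general {n : ℕ} {a b c d : Matrix (Fin n) (Fin n) ℝ}
    {s : ℝ → Matrix (Fin n) (Fin n) ℝ} {x : ℝ} (hu : IsUnit (1 + Complex.I • mc (s x)))
    (hs : HasDerivAt s (c + d * s x - s x * (a + b * s x)) x) :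
    HasDerivAt
      (fun y => (1 - Complex.I • mc (s y)) * (1 + Complex.I • mc (s y))⁻¹)
      (Cmat a b c d
        + Dmat a b c d * ((1 - Complex.I • mc (s x)) * (1 + Complex.I • mc (s x))⁻¹)
        - ((1 - Complex.I • mc (s x)) * (1 + Complex.I • mc (s x))⁻¹)
          * (mconj (Dmat a b c d)
            + mconj (Cmat a b c d)
              * ((1 - Complex.I • mc (s x)) * (1 + Complex.I • mc (s x))⁻¹))) x := by
  have h_mc : HasDerivAt (fun y => mc (s y))
      (mc c + mc d * mc (s x) - mc (s x) * (mc a + mc b * mc (s x))) x := by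
    simpa only [mc_eq_mapMatrix, map_add, map_sub, map_mul] using hasDerivAt_mc hs
  simp only [mconj_Cmat, mconj_Dmat, nonsing_inv_eq_ringInverse]
  exact hasDerivAt_cayley_of_riccati Complex.I_mul_I hu h_mc

theorem cayley_riccati_flow {n : ℕ}
    (a b c d : ℝ → Matrix (Fin n) (Fin n) ℝ)
    (ha : Continuous a) (hb : Continuous b) (hc : Continuous c) (hd : Continuous d)
    (hbs : ∀ x, (b x)ᵀ = b x) (hcs : ∀ x, (c x)ᵀ = c x) (had : ∀ x, a x = -(d x)ᵀ)
    (s : ℝ → Matrix (Fin n) (Fin n) ℝ) (hssym : ∀ x, (s x)ᵀ = s x)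
    (hs : ∀ x, HasDerivAt s (c x + d x * s x - s x * (a x + b x * s x)) x) :
    ∀ x, HasDerivAt
      (fun x => (1 - Complex.I • mc (s x)) * (1 + Complex.I • mc (s x))⁻¹)
      (Cmat (a x) (b x) (c x) (d x)
        + Dmat (a x) (b x) (c x) (d x)
          * ((1 - Complex.I • mc (s x)) * (1 + Complex.I • mc (s x))⁻¹)
        - ((1 - Complex.I • mc (s x)) * (1 + Complex.I • mc (s x))⁻¹)
          * (mconj (Dmat (a x) (b x) (c x) (d x))
            + mconj (Cmat (a x) (b x) (c x) (d x))
              * ((1 - Complex.I • mc (s x)) * (1 + Complex.I • mc (s x))⁻¹))) x :=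
  fun x => cayley_riccati_flow_general (isUnit_one_add_I_smul_mc (hssym x)) (hs x)
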